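/- arXiv:1804.07673 — 4 statements merged into one kernel-verified Lean document; each statement's English description precedes it below -/
import Mathlib

section
/- The maximum total number of edges of a 5-multigraph on 4 vertices without three crossing pairs equals 25, and the maximum total number of edges of a 5-multigraph on 5 vertices without three crossing pairs equals 40. -/
/-- A `p`-multigraph `G` (a `p`-tuple of simple graphs on a common vertex set) contains
three crossing pairs if there are three distinct indices `i, j, k` and four distinct
vertices `w, x, y, z` with `wx, yz ∈ G i`, `wy, xz ∈ G j`, and `wz, xy ∈ G k`. -/
def HasThreeCrossingPairs {p : ℕ} {V : Type*} (G : Fin p → SimpleGraph V) : Prop :=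
  ∃ i j k : Fin p, i ≠ j ∧ i ≠ k ∧ j ≠ k ∧
    ∃ w x y z : V, w ≠ x ∧ w ≠ y ∧ w ≠ z ∧ x ≠ y ∧ x ≠ z ∧ y ≠ z ∧
      (G i).Adj w x ∧ (G i).Adj y z ∧
      (G j).Adj w y ∧ (G j).Adj x z ∧
      (G k).Adj w z ∧ (G k).Adj x y

/-!
On four vertices the three crossing pairs are the three perfect matchings of `K₄`, so a graph has at
most `3` edges plus the number of matchings it contains. Call the graphs `G i` layers. Avoiding
three crossing pairs means that the three sets of layers containing the respective matchings have no
system of distinct representatives, and Hall's theorem then restricts their sizes: either some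
matching lies in no layer, so that every layer has at most `5` edges, or the total number of edges
is at most `max (4 * p + 2) (3 * p + 6)`. Five vertices are handled by averaging over vertex
deletions: if no layer is ever complete after a deletion, then each layer has at most `25 / 3`
edges, and otherwise the second bound for one deletion suffices. Taking every layer to be a
`K₄`-free Turán graph shows that both bounds are attained.
-/

open Finset SimpleGraph

section Hall

variable {ι α : Type*} {X : ι → Finset α}

lemma exists_forall_card_lt_of_not_exists_injective
    (hX : ¬ ∃ f : ι → α, Function.Injective f ∧ ∀ i, f i ∈ X i) :
    ∃ s : Finset ι, s.Nonempty ∧ ∀ i ∈ s, #(X i) < #s := by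
  classical
  rw [← all_card_le_biUnion_card_iff_exists_injective] at hX
  push Not at hX
  obtain ⟨s, hs⟩ := hX
  exact ⟨s, card_pos.mp (Nat.zero_lt_of_lt hs),
    fun i hi => (card_le_card (subset_biUnion_of_mem X hi)).trans_lt hs⟩

lemma sum_card_le_of_forall_card_lt [Fintype ι] [DecidableEq ι] [Fintype α] {s : Finset ι}
    (hs : ∀ i ∈ s, #(X i) < #s) :
    ∑ i, #(X i) ≤ #s * (#s - 1) + #sᶜ * Fintype.card α := by
  rw [← sum_add_sum_compl s]
  gcongr
  · exact sum_le_card_nsmul _ _ _ fun i hi => Nat.le_sub_one_of_lt (hs i hi)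
  · exact sum_le_card_nsmul _ _ _ fun i _ => card_le_univ (X i)

end Hall

section EdgeCount

variable {V W : Type*}

lemma ncard_edgeSet_comap_equiv (e : V ≃ W) (G : SimpleGraph W) :
    (G.comap e).edgeSet.ncard = G.edgeSet.ncard :=
  Nat.card_congr (Iso.comap e G).mapEdgeSet

lemma sum_ncard_edgeSet_induce_compl_singleton [Fintype V] (G : SimpleGraph V) :
    ∑ v, (G.induce {v}ᶜ).edgeSet.ncard + 2 * G.edgeSet.ncard =
      Fintype.card V * G.edgeSet.ncard := by
  classical
  have ncard_add_degree (v : V) :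
      (G.induce {v}ᶜ).edgeSet.ncard + G.degree v = G.edgeSet.ncard := by
    simp only [Set.ncard_eq_toFinset_card', Set.toFinset_card, ← edgeFinset_card]
    rw [card_edgeFinset_induce_compl_singleton, card_edgeFinset_deleteIncidenceSet,
      Nat.sub_add_cancel (G.degree_le_card_edgeFinset v)]
  have two_mul_ncard : 2 * G.edgeSet.ncard = ∑ v, G.degree v := by
    rw [sum_degrees_eq_twice_card_edges, ← coe_edgeFinset, Set.ncard_coe_finset]
  rw [two_mul_ncard, ← sum_add_distrib]
  simp [ncard_add_degree]

lemma three_mul_ncard_edgeSet_eq_sum_induce [Fintype V] (hV : Fintype.card V = 5)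
    (G : SimpleGraph V) :
    3 * G.edgeSet.ncard = ∑ v, (G.induce {v}ᶜ).edgeSet.ncard := by
  have := sum_ncard_edgeSet_induce_compl_singleton G
  rw [hV] at this
  omega

lemma ncard_edgeSet_le_eight_of_forall_induce [Fintype V] (hV : Fintype.card V = 5)
    {G : SimpleGraph V} (hG : ∀ v, (G.induce {v}ᶜ).edgeSet.ncard ≤ 5) : G.edgeSet.ncard ≤ 8 := by
  have := sum_le_card_nsmul univ _ 5 fun v _ => hG v
  rw [← three_mul_ncard_edgeSet_eq_sum_induce hV, card_univ, hV, smul_eq_mul] at this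
  omega

lemma exists_cliqueFree_ncard_edgeSet_eq_card_turanGraph (V : Type*) [Finite V] {r : ℕ}
    (hr : 0 < r) :
    ∃ G : SimpleGraph V, G.CliqueFree (r + 1) ∧
      G.edgeSet.ncard = #(turanGraph (Nat.card V) r).edgeFinset := by
  let e := Finite.equivFin V
  refine ⟨(turanGraph (Nat.card V) r).comap e,
    (turanGraph_cliqueFree hr).comap (Iso.comap e _).isContained, ?_⟩
  rw [ncard_edgeSet_comap_equiv, ← coe_edgeFinset, Set.ncard_coe_finset]

end EdgeCount

section CrossingPair

/-- The three pairs of disjoint edges on four vertices, i.e. the perfect matchings of `K₄`. The pair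
with index `t` is the one that matches `0` with `t + 1`. -/
def crossingPair : Fin 3 → Finset (Sym2 (Fin 4)) :=
  ![{s(0, 1), s(2, 3)}, {s(0, 2), s(1, 3)}, {s(0, 3), s(1, 2)}]

lemma card_crossingPair (t : Fin 3) : #(crossingPair t) = 2 := by
  decide +revert

lemma exists_mem_crossingPair {e : Sym2 (Fin 4)} (he : ¬ e.IsDiag) : ∃ t, e ∈ crossingPair t := by
  decide +revert

open scoped Classical in
lemma ncard_edgeSet_le_three_add_card_crossingPair (G : SimpleGraph (Fin 4)) :
    G.edgeSet.ncard ≤ 3 + #{t | ↑(crossingPair t) ⊆ G.edgeSet} := by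
  have edges_subset : G.edgeFinset ⊆ univ.biUnion fun t => crossingPair t ∩ G.edgeFinset := by
    intro e he
    obtain ⟨t, ht⟩ := exists_mem_crossingPair (G.not_isDiag_of_mem_edgeFinset he)
    exact mem_biUnion.mpr ⟨t, mem_univ t, mem_inter.mpr ⟨ht, he⟩⟩
  have card_inter_le (t : Fin 3) : #(crossingPair t ∩ G.edgeFinset) ≤
      1 + if ↑(crossingPair t) ⊆ G.edgeSet then 1 else 0 := by
    split_ifs with ht
    · exact (card_le_card inter_subset_left).trans_eq (card_crossingPair t)
    · have : crossingPair t ∩ G.edgeFinset ⊂ crossingPair t :=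
        inter_subset_left.ssubset_of_ne (by rwa [Ne, inter_eq_left, ← coe_subset, coe_edgeFinset])
      exact Nat.le_of_lt_succ ((card_lt_card this).trans_eq (card_crossingPair t))
  calc G.edgeSet.ncard
      = #G.edgeFinset := by rw [← coe_edgeFinset, Set.ncard_coe_finset]
    _ ≤ ∑ t, #(crossingPair t ∩ G.edgeFinset) := (card_le_card edges_subset).trans card_biUnion_le
    _ ≤ ∑ t, (1 + if ↑(crossingPair t) ⊆ G.edgeSet then 1 else 0) :=
        sum_le_sum fun t _ => card_inter_le t
    _ = 3 + #{t | ↑(crossingPair t) ⊆ G.edgeSet} := by simp [sum_add_distrib]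

lemma ncard_edgeSet_le_five_of_not_subset {G : SimpleGraph (Fin 4)} {t : Fin 3}
    (ht : ¬ ↑(crossingPair t) ⊆ G.edgeSet) : G.edgeSet.ncard ≤ 5 := by
  classical
  have card_lt : #{t | ↑(crossingPair t) ⊆ G.edgeSet} < 3 :=
    card_lt_univ_of_notMem (x := t) (by simpa using ht)
  have := ncard_edgeSet_le_three_add_card_crossingPair G
  omega

end CrossingPair

section Multigraph

variable {p : ℕ} {V W : Type*}

lemma HasThreeCrossingPairs.of_comap {f : V → W} (hf : f.Injective)
    {G : Fin p → SimpleGraph W} (h : HasThreeCrossingPairs fun i => (G i).comap f) :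
    HasThreeCrossingPairs G := by
  obtain ⟨i, j, k, hij, hik, hjk, w, x, y, z, hwx, hwy, hwz, hxy, hxz, hyz, hG⟩ := h
  exact ⟨i, j, k, hij, hik, hjk, f w, f x, f y, f z, hf.ne hwx, hf.ne hwy, hf.ne hwz, hf.ne hxy,
    hf.ne hxz, hf.ne hyz, hG⟩

lemma not_hasThreeCrossingPairs_const {G : SimpleGraph V} (hG : G.CliqueFree 4) :
    ¬ HasThreeCrossingPairs fun _ : Fin p => G := by
  classical
  rintro ⟨_, _, _, -, -, -, w, x, y, z, hne_wx, hne_wy, hne_wz, hne_xy, hne_xz, hne_yz,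
    hwx, hyz, hwy, hxz, hwz, hxy⟩
  exact hG {w, x, y, z} ⟨by simp [isClique_insert, hwx, hwy, hwz, hxy, hxz, hyz],
    by simp [hne_wx, hne_wy, hne_wz, hne_xy, hne_xz, hne_yz]⟩

open scoped Classical in
/-- The layers of a multigraph on four vertices that contain both edges of the crossing pair `t`. -/
noncomputable def crossingLayers (G : Fin p → SimpleGraph (Fin 4)) (t : Fin 3) : Finset (Fin p) :=
  {i | ↑(crossingPair t) ⊆ (G i).edgeSet}

lemma mem_crossingLayers {G : Fin p → SimpleGraph (Fin 4)} {t : Fin 3} {i : Fin p} :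
    i ∈ crossingLayers G t ↔ ↑(crossingPair t) ⊆ (G i).edgeSet := by
  simp [crossingLayers]

lemma HasThreeCrossingPairs.of_injective_mem_crossingLayers {G : Fin p → SimpleGraph (Fin 4)}
    {f : Fin 3 → Fin p} (hf : f.Injective) (h : ∀ t, f t ∈ crossingLayers G t) :
    HasThreeCrossingPairs G := by
  have h₀ : (G (f 0)).Adj 0 1 ∧ (G (f 0)).Adj 2 3 := by
    simpa [mem_crossingLayers, crossingPair, Set.pair_subset_iff] using h 0
  have h₁ : (G (f 1)).Adj 0 2 ∧ (G (f 1)).Adj 1 3 := by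
    simpa [mem_crossingLayers, crossingPair, Set.pair_subset_iff] using h 1
  have h₂ : (G (f 2)).Adj 0 3 ∧ (G (f 2)).Adj 1 2 := by
    simpa [mem_crossingLayers, crossingPair, Set.pair_subset_iff] using h 2
  exact ⟨f 0, f 1, f 2, hf.ne (by decide), hf.ne (by decide), hf.ne (by decide), 0, 1, 2, 3,
    by decide, by decide, by decide, by decide, by decide, by decide,
    h₀.1, h₀.2, h₁.1, h₁.2, h₂.1, h₂.2⟩

lemma sum_ncard_edgeSet_le_three_mul_add_sum_card (G : Fin p → SimpleGraph (Fin 4)) :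
    ∑ i, (G i).edgeSet.ncard ≤ 3 * p + ∑ t, #(crossingLayers G t) := by
  classical
  calc ∑ i, (G i).edgeSet.ncard
      ≤ ∑ i, (3 + #{t | ↑(crossingPair t) ⊆ (G i).edgeSet}) :=
        sum_le_sum fun i _ => ncard_edgeSet_le_three_add_card_crossingPair (G i)
    _ = 3 * p + ∑ i, #{t | ↑(crossingPair t) ⊆ (G i).edgeSet} := by
        simp [sum_add_distrib, mul_comm]
    _ = 3 * p + ∑ t, #(crossingLayers G t) := by
        congr 1
        simpa [bipartiteAbove, bipartiteBelow, crossingLayers] using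
          sum_card_bipartiteAbove_eq_sum_card_bipartiteBelow (s := univ) (t := univ)
            fun i t => ↑(crossingPair t) ⊆ (G i).edgeSet

lemma forall_ncard_edgeSet_le_five_or_sum_ncard_edgeSet_le_fin {G : Fin p → SimpleGraph (Fin 4)}
    (hG : ¬ HasThreeCrossingPairs G) :
    (∀ i, (G i).edgeSet.ncard ≤ 5) ∨
      ∑ i, (G i).edgeSet.ncard ≤ max (4 * p + 2) (3 * p + 6) := by
  classical
  have no_transversal : ¬ ∃ f : Fin 3 → Fin p, f.Injective ∧ ∀ t, f t ∈ crossingLayers G t :=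
    fun ⟨_, hf, hmem⟩ => hG (.of_injective_mem_crossingLayers hf hmem)
  obtain ⟨s, hs_nonempty, hs⟩ := exists_forall_card_lt_of_not_exists_injective no_transversal
  by_cases hs_one : #s = 1
  · obtain ⟨t, ht⟩ := hs_nonempty
    have ht_empty : crossingLayers G t = ∅ := card_eq_zero.mp (by have := hs t ht; omega)
    exact .inl fun i => ncard_edgeSet_le_five_of_not_subset (t := t)
      (by simp [← mem_crossingLayers, ht_empty])
  · right
    have hsum := sum_ncard_edgeSet_le_three_mul_add_sum_card G
    have hsum_layers := sum_card_le_of_forall_card_lt hs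
    have hs_pos := hs_nonempty.card_pos
    have hs_le := card_le_univ s
    rw [card_compl] at hsum_layers
    simp only [Fintype.card_fin] at hsum_layers hs_le
    obtain hs_two | hs_three : #s = 2 ∨ #s = 3 := by omega
    · rw [hs_two] at hsum_layers; omega
    · rw [hs_three] at hsum_layers; omega

lemma forall_ncard_edgeSet_le_five_or_sum_ncard_edgeSet_le (hV : Nat.card V = 4)
    {G : Fin p → SimpleGraph V} (hG : ¬ HasThreeCrossingPairs G) :
    (∀ i, (G i).edgeSet.ncard ≤ 5) ∨
      ∑ i, (G i).edgeSet.ncard ≤ max (4 * p + 2) (3 * p + 6) := by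
  have : Finite V := Nat.finite_of_card_ne_zero (by omega)
  let e : Fin 4 ≃ V := (Finite.equivFinOfCardEq hV).symm
  simpa only [ncard_edgeSet_comap_equiv] using
    forall_ncard_edgeSet_le_five_or_sum_ncard_edgeSet_le_fin fun h => hG (h.of_comap e.injective)

lemma sum_ncard_edgeSet_le_five_mul (hp : 3 ≤ p) (hV : Nat.card V = 4)
    {G : Fin p → SimpleGraph V} (hG : ¬ HasThreeCrossingPairs G) :
    ∑ i, (G i).edgeSet.ncard ≤ 5 * p := by
  obtain hle | hsum := forall_ncard_edgeSet_le_five_or_sum_ncard_edgeSet_le hV hG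
  · simpa [mul_comm] using sum_le_card_nsmul univ _ 5 fun i _ => hle i
  · omega

lemma sum_ncard_edgeSet_le_eight_mul (hp : 4 ≤ p) (hV : Nat.card V = 5)
    {G : Fin p → SimpleGraph V} (hG : ¬ HasThreeCrossingPairs G) :
    ∑ i, (G i).edgeSet.ncard ≤ 8 * p := by
  classical
  have : Finite V := Nat.finite_of_card_ne_zero (by omega)
  have := Fintype.ofFinite V
  rw [Nat.card_eq_fintype_card] at hV
  have hcard (v : V) : Nat.card ({v}ᶜ : Set V) = 4 := by
    rw [Nat.card_coe_set_eq, Set.ncard_compl, Set.ncard_singleton, Nat.card_eq_fintype_card, hV]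
  have hG_deletion (v : V) : ¬ HasThreeCrossingPairs fun i => (G i).induce {v}ᶜ :=
    fun h => hG (h.of_comap Subtype.val_injective)
  by_cases hle : ∀ i v, ((G i).induce {v}ᶜ).edgeSet.ncard ≤ 5
  · simpa [mul_comm] using sum_le_card_nsmul univ _ 8 fun i _ =>
      ncard_edgeSet_le_eight_of_forall_induce hV (hle i)
  · push Not at hle
    obtain ⟨i, v, hv⟩ := hle
    have deletion_le : ∑ i, ((G i).induce {v}ᶜ).edgeSet.ncard ≤ 4 * p + 2 := by
      have := (forall_ncard_edgeSet_le_five_or_sum_ncard_edgeSet_le (hcard v)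
        (hG_deletion v)).resolve_left fun h => (h i).not_gt hv
      omega
    have other_deletions_le :
        ∑ u ∈ univ.erase v, ∑ i, ((G i).induce {u}ᶜ).edgeSet.ncard ≤ 4 * (5 * p) := by
      have := sum_le_card_nsmul (univ.erase v) _ _ fun u _ =>
        sum_ncard_edgeSet_le_five_mul (by omega) (hcard u) (hG_deletion u)
      simpa [card_erase_of_mem, hV] using this
    have total_le : 3 * ∑ i, (G i).edgeSet.ncard ≤ 24 * p + 2 := by
      simp only [mul_sum, three_mul_ncard_edgeSet_eq_sum_induce hV]
      rw [sum_comm, ← add_sum_erase univ _ (mem_univ v)]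
      omega
    omega

lemma exists_sum_ncard_edgeSet_eq_mul_card_turanGraph (p : ℕ) (V : Type*) [Finite V] :
    ∃ G : Fin p → SimpleGraph V, ¬ HasThreeCrossingPairs G ∧
      ∑ i, (G i).edgeSet.ncard = #(turanGraph (Nat.card V) 3).edgeFinset * p := by
  obtain ⟨G, hG, hcard⟩ := exists_cliqueFree_ncard_edgeSet_eq_card_turanGraph V three_pos
  exact ⟨fun _ => G, not_hasThreeCrossingPairs_const hG, by simp [hcard, mul_comm]⟩

end Multigraph

theorem f5_four_and_five_general (p : ℕ) (V : Type*) :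
    (3 ≤ p → Nat.card V = 4 →
      IsGreatest {m : ℕ | ∃ G : Fin p → SimpleGraph V,
        ¬ HasThreeCrossingPairs G ∧ ∑ i, (G i).edgeSet.ncard = m} (5 * p)) ∧
    (4 ≤ p → Nat.card V = 5 →
      IsGreatest {m : ℕ | ∃ G : Fin p → SimpleGraph V,
        ¬ HasThreeCrossingPairs G ∧ ∑ i, (G i).edgeSet.ncard = m} (8 * p)) := by
  refine ⟨fun hp hV => ⟨?_, ?_⟩, fun hp hV => ⟨?_, ?_⟩⟩
  · have : Finite V := Nat.finite_of_card_ne_zero (by omega)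
    simpa [hV, card_edgeFinset_turanGraph] using
      exists_sum_ncard_edgeSet_eq_mul_card_turanGraph p V
  · rintro m ⟨G, hG, rfl⟩
    exact sum_ncard_edgeSet_le_five_mul hp hV hG
  · have : Finite V := Nat.finite_of_card_ne_zero (by omega)
    simpa [hV, card_edgeFinset_turanGraph] using
      exists_sum_ncard_edgeSet_eq_mul_card_turanGraph p V
  · rintro m ⟨G, hG, rfl⟩
    exact sum_ncard_edgeSet_le_eight_mul hp hV hG

/-- `f₅(4) = 25` and `f₅(5) = 40`: the maximum total number of edges of a `5`-multigraph
without three crossing pairs on `4` resp. `5` vertices. -/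
theorem f5_four_and_five :
    IsGreatest {m : ℕ | ∃ G : Fin 5 → SimpleGraph (Fin 4),
        ¬ HasThreeCrossingPairs G ∧ ∑ i, (G i).edgeSet.ncard = m} 25 ∧
    IsGreatest {m : ℕ | ∃ G : Fin 5 → SimpleGraph (Fin 5),
        ¬ HasThreeCrossingPairs G ∧ ∑ i, (G i).edgeSet.ncard = m} 40 :=
  ⟨(f5_four_and_five_general 5 (Fin 4)).1 (by decide) (Nat.card_fin 4),
    (f5_four_and_five_general 5 (Fin 5)).2 (by decide) (Nat.card_fin 5)⟩
end

section
/- For every n ≥ 4 there exists a 5-multigraph on n vertices not containing three crossing pairs whose total number of edges is at least max(5·⌊n²/3⌋, 2·C(n,2) + 3·⌊n²/4⌋). -/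
/-!
Two constructions give the two terms of the maximum.

* Five copies of the tripartite Turán graph: three crossing pairs use all six pairs of a
  four-element vertex set, so their union contains a `K₄`.
* Split the vertices into halves `A` and `Aᶜ`; take two copies of the graph of all pairs meeting
  `A`, two of the graph of all pairs meeting `Aᶜ`, and one complete bipartite graph between them.
  Among any three colors there is one in which `A` is independent, so the two pairs of that color
  show that a crossing configuration has at most two vertices in `A`, and likewise in `Aᶜ`.
  The configuration is thus split two-two, and the color joining the two vertices in `A` also joins
  the two vertices in `Aᶜ`, which no single color does. For the edge count, the
  graphs of the pairs meeting `A` and of those meeting `Aᶜ` have the complete graph as union and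
  the complete bipartite graph as intersection.
-/

open SimpleGraph

variable {V : Type*}

section Obstructions

variable {p : ℕ} {G : Fin p → SimpleGraph V}

theorem not_hasThreeCrossingPairs_of_le_of_cliqueFree {H : SimpleGraph V}
    (hGH : ∀ i, G i ≤ H) (hH : H.CliqueFree 4) : ¬ HasThreeCrossingPairs G := by
  classical
  rintro ⟨i, j, k, -, -, -, w, x, y, z, hne_wx, hne_wy, hne_wz, hne_xy, hne_xz, hne_yz,
    hwx, hyz, hwy, hxz, hwz, hxy⟩
  refine hH {w, x, y, z} ⟨?_, by simp [*]⟩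
  simp [isClique_insert, hGH i hwx, hGH i hyz, hGH j hwy, hGH j hxz, hGH k hwz, hGH k hxy]

theorem not_mem_and_mem_of_isIndepSet_of_adj {H : SimpleGraph V} {s : Set V} {u v : V}
    (hs : H.IsIndepSet s) (huv : H.Adj u v) : ¬ (u ∈ s ∧ v ∈ s) :=
  fun h ↦ hs h.1 h.2 huv.ne huv

theorem exists_notMem_of_card_le_two {α : Type*} {I : Finset α} (hI : I.card ≤ 2)
    {i j k : α} (hij : i ≠ j) (hik : i ≠ k) (hjk : j ≠ k) : i ∉ I ∨ j ∉ I ∨ k ∉ I := by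
  classical
  have hcard : I.card < ({i, j, k} : Finset α).card :=
    (Nat.lt_succ_of_le hI).trans_eq (Finset.card_eq_three.mpr ⟨i, j, k, hij, hik, hjk, rfl⟩).symm
  simpa using Finset.exists_mem_notMem_of_card_lt_card hcard

theorem not_hasThreeCrossingPairs_of_isIndepSet {s : Set V} {I J : Finset (Fin p)}
    (hI : I.card ≤ 2) (hJ : J.card ≤ 2) (hIJ : Disjoint I J)
    (hs : ∀ i ∉ I, (G i).IsIndepSet s) (hsc : ∀ i ∉ J, (G i).IsIndepSet sᶜ) :
    ¬ HasThreeCrossingPairs G := by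
  rintro ⟨i, j, k, hij, hik, hjk, w, x, y, z, -, -, -, -, -, -, hwx, hyz, hwy, hxz, hwz, hxy⟩
  have at_most_two {t : Set V} {K : Finset (Fin p)} (hK : K.card ≤ 2)
      (ht : ∀ c ∉ K, (G c).IsIndepSet t) :
      ¬ (w ∈ t ∧ x ∈ t ∧ y ∈ t) ∧ ¬ (w ∈ t ∧ x ∈ t ∧ z ∈ t) ∧
        ¬ (w ∈ t ∧ y ∈ t ∧ z ∈ t) ∧ ¬ (x ∈ t ∧ y ∈ t ∧ z ∈ t) := by
    have not_both {c : Fin p} (hc : c ∉ K) {u v : V} (huv : (G c).Adj u v) : ¬ (u ∈ t ∧ v ∈ t) :=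
      not_mem_and_mem_of_isIndepSet_of_adj (ht c hc) huv
    rcases exists_notMem_of_card_le_two hK hij hik hjk with hi | hj | hk
    · grind [not_both hi hwx, not_both hi hyz]
    · grind [not_both hj hwy, not_both hj hxz]
    · grind [not_both hk hwz, not_both hk hxy]
  have not_separated {c : Fin p} {a b a' b' : V} (hab : (G c).Adj a b) (hab' : (G c).Adj a' b') :
      ¬ ((a ∈ s ∧ b ∈ s) ∧ (a' ∈ sᶜ ∧ b' ∈ sᶜ)) := by
    rintro ⟨hmem, hmem'⟩
    by_cases hc : c ∈ I
    · exact not_mem_and_mem_of_isIndepSet_of_adj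
        (hsc c (Finset.disjoint_left.mp hIJ hc)) hab' hmem'
    · exact not_mem_and_mem_of_isIndepSet_of_adj (hs c hc) hab hmem
  grind [at_most_two hI hs, at_most_two hJ hsc, not_separated hwx hyz, not_separated hyz hwx,
    not_separated hwy hxz, not_separated hxz hwy, not_separated hwz hxy, not_separated hxy hwz]

end Obstructions

section CompleteSplitGraph

/-- The complete split graph on `s`: the clique on `s` joined completely to the independent set
`sᶜ`. -/
def completeSplitGraph (s : Set V) : SimpleGraph V where
  Adj u v := u ≠ v ∧ (u ∈ s ∨ v ∈ s)
  symm := ⟨fun _ _ h ↦ ⟨h.1.symm, h.2.symm⟩⟩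
  loopless := ⟨fun _ h ↦ h.1 rfl⟩

theorem completeSplitGraph_isIndepSet_compl (s : Set V) :
    (completeSplitGraph s).IsIndepSet sᶜ :=
  fun _ hu _ hv _ huv ↦ huv.2.elim hu hv

theorem completeSplitGraph_sup_compl (s : Set V) :
    completeSplitGraph s ⊔ completeSplitGraph sᶜ = ⊤ := by
  ext u v
  simp only [completeSplitGraph, sup_adj, top_adj, Set.mem_compl_iff]
  tauto

theorem completeSplitGraph_inf_compl (s : Set V) :
    completeSplitGraph s ⊓ completeSplitGraph sᶜ = between s sᶜ ⊤ := by
  ext u v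
  simp only [completeSplitGraph, inf_adj, between_adj, top_adj, Set.mem_compl_iff]
  tauto

theorem ncard_edgeSet_completeSplitGraph_add_compl [Finite V] (s : Set V) :
    (completeSplitGraph s).edgeSet.ncard + (completeSplitGraph sᶜ).edgeSet.ncard =
      (Nat.card V).choose 2 + (between s sᶜ ⊤).edgeSet.ncard := by
  rw [← Set.ncard_union_add_ncard_inter, ← edgeSet_sup, ← edgeSet_inf,
    completeSplitGraph_sup_compl, completeSplitGraph_inf_compl, edgeSet_top,
    Sym2.ncard_diagSet_compl]

end CompleteSplitGraph

section EdgeCounts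

theorem edgeSet_between_top_of_disjoint {s t : Set V} (hst : Disjoint s t) :
    (between s t ⊤).edgeSet = (fun a : V × V ↦ s(a.1, a.2)) '' s ×ˢ t := by
  refine Set.ext <| Sym2.ind fun u v ↦ ?_
  simp only [mem_edgeSet, between_adj, top_adj, Set.mem_image, Set.mem_prod, Prod.exists,
    Sym2.eq_iff]
  constructor
  · rintro ⟨-, ⟨hu, hv⟩ | ⟨hu, hv⟩⟩
    · exact ⟨u, v, ⟨hu, hv⟩, .inl ⟨rfl, rfl⟩⟩
    · exact ⟨v, u, ⟨hv, hu⟩, .inr ⟨rfl, rfl⟩⟩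
  · rintro ⟨a, b, ⟨ha, hb⟩, ⟨rfl, rfl⟩ | ⟨rfl, rfl⟩⟩
    · exact ⟨hst.ne_of_mem ha hb, .inl ⟨ha, hb⟩⟩
    · exact ⟨(hst.ne_of_mem ha hb).symm, .inr ⟨hb, ha⟩⟩

theorem ncard_edgeSet_between_top_of_disjoint {s t : Set V} (hst : Disjoint s t) :
    (between s t ⊤).edgeSet.ncard = s.ncard * t.ncard := by
  have hinj : Set.InjOn (fun a : V × V ↦ s(a.1, a.2)) (s ×ˢ t) := by
    grind [Set.InjOn]
  rw [edgeSet_between_top_of_disjoint hst, hinj.ncard_image, Set.ncard_prod]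

theorem ncard_edgeSet_turanGraph_three (n : ℕ) : (turanGraph n 3).edgeSet.ncard = n ^ 2 / 3 := by
  rw [← coe_edgeFinset, Set.ncard_coe_finset, card_edgeFinset_turanGraph]
  obtain ⟨q, r, hr, rfl⟩ : ∃ q r, r < 3 ∧ n = 3 * q + r :=
    ⟨n / 3, n % 3, Nat.mod_lt _ three_pos, (Nat.div_add_mod n 3).symm⟩
  have hmod : (3 * q + r) % 3 = r := by lia
  have hsq : (3 * q + r) ^ 2 = 9 * (q * q) + 6 * (q * r) + r ^ 2 := by ring
  have hchoose : r.choose 2 = r / 2 := by interval_cases r <;> rfl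
  rw [hmod, hsq, hchoose]
  interval_cases r <;> lia

theorem half_mul_sub_half (n : ℕ) : n / 2 * (n - n / 2) = n ^ 2 / 4 := by
  obtain ⟨m, rfl | rfl⟩ := n.even_or_odd'
  · have hsq : (2 * m) ^ 2 = 4 * (m * m) := by ring
    have hhalf : 2 * m / 2 = m := by lia
    have hsub : 2 * m - m = m := by lia
    rw [hhalf, hsub, hsq]
    lia
  · have hsq : (2 * m + 1) ^ 2 = 4 * (m * (m + 1)) + 1 := by ring
    have hhalf : (2 * m + 1) / 2 = m := by lia
    have hsub : 2 * m + 1 - m = m + 1 := by lia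
    rw [hhalf, hsub, hsq]
    lia

end EdgeCounts

section SplitMultigraph

/-- The `5`-multigraph of the vertex partition `s`, `sᶜ`: two copies of each of the two
complete split graphs, and the complete bipartite graph between the parts. -/
def splitMultigraph (s : Set V) : Fin 5 → SimpleGraph V :=
  ![completeSplitGraph s, completeSplitGraph s, completeSplitGraph sᶜ, completeSplitGraph sᶜ,
    between s sᶜ ⊤]

theorem not_hasThreeCrossingPairs_splitMultigraph (s : Set V) :
    ¬ HasThreeCrossingPairs (splitMultigraph s) := by
  have hsplit := completeSplitGraph_isIndepSet_compl s
  have hsplit' : (completeSplitGraph sᶜ).IsIndepSet s := by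
    simpa using completeSplitGraph_isIndepSet_compl sᶜ
  have hinf := (completeSplitGraph_inf_compl s).ge
  have hbetween : (between s sᶜ ⊤).IsIndepSet s :=
    hsplit'.imp fun _ _ hnadj hadj ↦ hnadj (hinf hadj).2
  have hbetween' : (between s sᶜ ⊤).IsIndepSet sᶜ :=
    hsplit.imp fun _ _ hnadj hadj ↦ hnadj (hinf hadj).1
  refine not_hasThreeCrossingPairs_of_isIndepSet (s := s) (I := {0, 1}) (J := {2, 3})
    (by decide) (by decide) (by decide) ?_ ?_ <;>
  · intro i hi
    fin_cases i <;> first | exact absurd hi (by decide) | assumption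

theorem sum_ncard_edgeSet_splitMultigraph [Finite V] (s : Set V) :
    ∑ i, (splitMultigraph s i).edgeSet.ncard =
      2 * (Nat.card V).choose 2 + 3 * (s.ncard * sᶜ.ncard) := by
  have hsplit := ncard_edgeSet_completeSplitGraph_add_compl s
  rw [ncard_edgeSet_between_top_of_disjoint disjoint_compl_right] at hsplit
  simp only [splitMultigraph, Fin.sum_univ_five, Matrix.cons_val,
    ncard_edgeSet_between_top_of_disjoint disjoint_compl_right]
  lia

end SplitMultigraph

/-- For every `n ≥ 4` there is a `5`-multigraph on `n` vertices without three crossing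
pairs having at least `max (5·⌊n²/3⌋) (2·C(n,2) + 3·⌊n²/4⌋)` edges in total. -/
theorem f5_lower_bound (n : ℕ) (hn : 4 ≤ n) :
    ∃ G : Fin 5 → SimpleGraph (Fin n), ¬ HasThreeCrossingPairs G ∧
      max (5 * (n ^ 2 / 3)) (2 * n.choose 2 + 3 * (n ^ 2 / 4)) ≤
        ∑ i, (G i).edgeSet.ncard := by
  rcases max_choice (5 * (n ^ 2 / 3)) (2 * n.choose 2 + 3 * (n ^ 2 / 4)) with hmax | hmax
  · refine ⟨fun _ ↦ turanGraph n 3,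
      not_hasThreeCrossingPairs_of_le_of_cliqueFree (fun _ ↦ le_rfl)
        (turanGraph_cliqueFree three_pos), ?_⟩
    simp [hmax, ncard_edgeSet_turanGraph_three]
  · obtain ⟨s, -, hs⟩ := Set.exists_subset_card_eq (s := (Set.univ : Set (Fin n))) (n := n / 2)
      (by simpa using Nat.div_le_self n 2)
    refine ⟨splitMultigraph s, not_hasThreeCrossingPairs_splitMultigraph s, ?_⟩
    rw [hmax, sum_ncard_edgeSet_splitMultigraph, Set.ncard_compl, hs, Nat.card_fin,
      half_mul_sub_half]
end

section
/- If n ≥ 9 is odd, then for every 5-multigraph on n−5 vertices without three crossing pairs with total number of edges e, one has b(n−5) + e + 7(n−5) + 10 < b(n). -/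
/-- A `3`-uniform hypergraph (given by its edge set `E`) contains the Fano plane if
there are seven distinct vertices `v 0, …, v 6` such that the seven triples below
(the lines of the projective plane over `GF(2)`) are all edges. -/
def ContainsFano {α : Type*} [DecidableEq α] (E : Finset (Finset α)) : Prop :=
  ∃ v : Fin 7 → α, Function.Injective v ∧
    ({v 0, v 1, v 2} : Finset α) ∈ E ∧ ({v 2, v 3, v 4} : Finset α) ∈ E ∧
    ({v 0, v 4, v 5} : Finset α) ∈ E ∧ ({v 0, v 3, v 6} : Finset α) ∈ E ∧
    ({v 2, v 5, v 6} : Finset α) ∈ E ∧ ({v 1, v 4, v 6} : Finset α) ∈ E ∧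
    ({v 1, v 3, v 5} : Finset α) ∈ E

/-- `b n = C(n,3) − C(⌊n/2⌋,3) − C(⌈n/2⌉,3)`, the number of edges of the balanced,
complete, bipartite `3`-uniform hypergraph on `n` vertices. -/
def b (n : ℕ) : ℕ := n.choose 3 - (n / 2).choose 3 - ((n + 1) / 2).choose 3

/-!
Let `p ≥ 3` and let `G` be a `p`-multigraph without three crossing pairs. If four vertices carried
more than `5 * p` edges, then fewer than `p` of the `3 * p` pairs of a perfect matching of these
vertices and a graph would have the matching not contained in the graph, and Hall's theorem would
find the three matchings in three distinct graphs. For `p = 4` this local bound forces an average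
multiplicity of about `3`: one removes from the vertex set, again and again, a triple, a pair or a
single vertex to which every other vertex sends at most `3` edges per removed vertex. Averaging over
the five ways of deleting one graph, a `5`-multigraph on `m` vertices has at most
`(15 * m ^ 2 - 5 * m) / 8` edges, while `b (m + 5) - b m` is at least
`(15 * m ^ 2 + 54 * m + 72) / 8`. Only for `m ≤ 2` does one need the trivial bound `5 * C(m, 2)` on
the edges instead.
-/

open Finset

section Transversal

variable {ι α : Type*} [Fintype ι] [Fintype α]

theorem exists_injective_mem_of_card_mul_card_lt (A : ι → Finset α)
    (hια : Fintype.card ι ≤ Fintype.card α)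
    (hA : Fintype.card ι * Fintype.card α < ∑ i, #(A i) + Fintype.card α) :
    ∃ f : ι → α, f.Injective ∧ ∀ i, f i ∈ A i := by
  classical
  refine (all_card_le_biUnion_card_iff_exists_injective A).mp fun s ↦ ?_
  by_contra! hs
  have hsum_mem : ∑ i ∈ s, #(A i) ≤ #s * #(s.biUnion A) :=
    sum_le_card_nsmul _ _ _ fun i hi ↦ card_le_card (subset_biUnion_of_mem A hi)
  have hsum_notMem : ∑ i ∈ sᶜ, #(A i) ≤ #sᶜ * Fintype.card α :=
    sum_le_card_nsmul _ _ _ fun i _ ↦ card_le_univ (A i)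
  have hcard : #s + #sᶜ = Fintype.card ι := card_add_card_compl s
  rw [← sum_add_sum_compl s, ← hcard, add_mul] at hA
  have hlt : #s * Fintype.card α < #s * #(s.biUnion A) + Fintype.card α := by omega
  have hsα : #s ≤ Fintype.card α := (card_le_univ s).trans hια
  nlinarith [hlt, hsα, hs]

end Transversal

section PairWeight

variable {V : Type*} {W : V → V → ℕ} {k : ℕ}

/-- The total weight of the ordered pairs of elements of `S`. For a symmetric weight vanishing on
the diagonal this is twice the weight of the complete graph on `S`. -/
def pairWeight (W : V → V → ℕ) (S : Finset V) : ℕ := ∑ u ∈ S, ∑ v ∈ S, W u v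

theorem pairWeight_union [DecidableEq V] (hsymm : ∀ x y, W x y = W y x) {S T : Finset V}
    (hST : Disjoint S T) :
    pairWeight W (S ∪ T) = pairWeight W S + pairWeight W T + 2 * ∑ v ∈ T, ∑ u ∈ S, W u v := by
  have hcomm : ∑ u ∈ S, ∑ v ∈ T, W u v = ∑ v ∈ T, ∑ u ∈ S, W u v := sum_comm
  have hswap : ∑ u ∈ T, ∑ v ∈ S, W u v = ∑ v ∈ T, ∑ u ∈ S, W u v := by simp only [hsymm]
  simp only [pairWeight, sum_union hST, sum_add_distrib, hcomm, hswap]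
  ring

theorem pairWeight_singleton (x : V) : pairWeight W {x} = W x x := by
  simp [pairWeight]

theorem pairWeight_insert [DecidableEq V] (hsymm : ∀ x y, W x y = W y x) (hdiag : ∀ x, W x x = 0)
    {S : Finset V} {x : V} (hx : x ∉ S) :
    pairWeight W (insert x S) = pairWeight W S + 2 * ∑ u ∈ S, W u x := by
  rw [insert_eq, union_comm, pairWeight_union hsymm (disjoint_singleton_right.mpr hx),
    pairWeight_singleton, hdiag, sum_singleton, add_zero]

theorem pairWeight_le_card_mul (hdiag : ∀ x, W x x = 0) (hW : ∀ x y, W x y ≤ k) (S : Finset V) :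
    pairWeight W S ≤ #S * ((#S - 1) * k) := by
  classical
  refine sum_le_card_nsmul _ _ _ fun u hu ↦ ?_
  rw [← sum_erase S (hdiag u), ← card_erase_of_mem hu]
  exact sum_le_card_nsmul _ _ _ fun v _ ↦ hW u v

theorem pairWeight_add_card_le_of_sdiff [DecidableEq V] (hsymm : ∀ x y, W x y = W y x)
    {S T : Finset V} (hTS : T ⊆ S) (hT : pairWeight W T + #T ≤ k * #T ^ 2)
    (hcross : ∀ v ∈ S \ T, ∑ u ∈ T, W u v ≤ k * #T)
    (hrest : pairWeight W (S \ T) + #(S \ T) ≤ k * #(S \ T) ^ 2) :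
    pairWeight W S + #S ≤ k * #S ^ 2 := by
  have hcross_sum : ∑ v ∈ S \ T, ∑ u ∈ T, W u v ≤ #(S \ T) * (k * #T) :=
    sum_le_card_nsmul _ _ _ hcross
  have hweight := pairWeight_union hsymm (disjoint_sdiff : Disjoint T (S \ T))
  rw [union_sdiff_of_subset hTS] at hweight
  rw [hweight, ← card_sdiff_add_card_eq_card hTS]
  linarith

theorem sum_le_of_forall_pairWeight_lt [DecidableEq V] (hsymm : ∀ x y, W x y = W y x)
    (hdiag : ∀ x, W x x = 0) {S T : Finset V} (hTS : T ⊆ S)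
    (h : ∀ Q ⊆ S, #Q = #T + 1 → pairWeight W Q < pairWeight W T + 2 * (k * #T + 1)) :
    ∀ v ∈ S \ T, ∑ u ∈ T, W u v ≤ k * #T := by
  intro v hv
  obtain ⟨hvS, hvT⟩ := mem_sdiff.mp hv
  have hlt := h (insert v T) (insert_subset hvS hTS) (card_insert_of_notMem hvT)
  rw [pairWeight_insert hsymm hdiag hvT] at hlt
  omega

-- Take `T` to be a triple of weight at least `3 * k + 2` if there is one, else a pair of weight
-- `k + 1`, else any vertex: in each case a further vertex of larger weight towards `T` is excluded,
-- by the four-set hypothesis or by the choice of `T`.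
theorem exists_subset_sum_le [DecidableEq V] (hk : 3 ≤ k) (hsymm : ∀ x y, W x y = W y x)
    (hdiag : ∀ x, W x x = 0) (hW : ∀ x y, W x y ≤ k + 1)
    (hfour : ∀ Q : Finset V, #Q = 4 → pairWeight W Q ≤ 2 * (6 * k + 2))
    {S : Finset V} (hS : S.Nonempty) :
    ∃ T ⊆ S, T.Nonempty ∧ pairWeight W T + #T ≤ k * #T ^ 2 ∧
      ∀ v ∈ S \ T, ∑ u ∈ T, W u v ≤ k * #T := by
  by_cases htriple : ∃ T ⊆ S, #T = 3 ∧ 2 * (3 * k + 2) ≤ pairWeight W T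
  · obtain ⟨T, hTS, hcard, hheavy⟩ := htriple
    have hT := pairWeight_le_card_mul hdiag hW T
    refine ⟨T, hTS, card_pos.mp (by omega), by rw [hcard] at hT ⊢; omega,
      sum_le_of_forall_pairWeight_lt hsymm hdiag hTS fun Q _ hQ ↦ ?_⟩
    rw [hcard] at hQ ⊢
    linarith [hfour Q hQ]
  push Not at htriple
  by_cases hpair : ∃ T ⊆ S, #T = 2 ∧ 2 * (k + 1) ≤ pairWeight W T
  · obtain ⟨T, hTS, hcard, hheavy⟩ := hpair
    have hT := pairWeight_le_card_mul hdiag hW T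
    refine ⟨T, hTS, card_pos.mp (by omega), by rw [hcard] at hT ⊢; omega,
      sum_le_of_forall_pairWeight_lt hsymm hdiag hTS fun Q hQS hQ ↦ ?_⟩
    rw [hcard] at hQ ⊢
    linarith [htriple Q hQS hQ]
  push Not at hpair
  obtain ⟨x, hx⟩ := hS
  have hxS : {x} ⊆ S := singleton_subset_iff.mpr hx
  have hzero : pairWeight W {x} = 0 := (pairWeight_singleton x).trans (hdiag x)
  refine ⟨{x}, hxS, singleton_nonempty x, by rw [hzero, card_singleton]; omega,
    sum_le_of_forall_pairWeight_lt hsymm hdiag hxS fun Q hQS hQ ↦ ?_⟩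
  rw [card_singleton] at hQ ⊢
  linarith [hpair Q hQS hQ]

theorem pairWeight_add_card_le (hk : 3 ≤ k) (hsymm : ∀ x y, W x y = W y x)
    (hdiag : ∀ x, W x x = 0) (hW : ∀ x y, W x y ≤ k + 1)
    (hfour : ∀ Q : Finset V, #Q = 4 → pairWeight W Q ≤ 2 * (6 * k + 2)) (S : Finset V) :
    pairWeight W S + #S ≤ k * #S ^ 2 := by
  classical
  induction S using Finset.strongInduction with
  | H S ih =>
    obtain rfl | hS := S.eq_empty_or_nonempty
    · simp [pairWeight]
    obtain ⟨T, hTS, hT, hTweight, hcross⟩ := exists_subset_sum_le hk hsymm hdiag hW hfour hS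
    exact pairWeight_add_card_le_of_sdiff hsymm hTS hTweight hcross (ih _ (sdiff_ssubset hTS hT))

end PairWeight

section EdgeMultiplicity

variable {ι V : Type*} [Fintype ι] (G : ι → SimpleGraph V)

open Classical in
/-- The number of graphs of the multigraph `G` in which `x` and `y` are adjacent. -/
noncomputable def edgeMultiplicity (x y : V) : ℕ := #{i | (G i).Adj x y}

theorem edgeMultiplicity_comm (x y : V) : edgeMultiplicity G x y = edgeMultiplicity G y x := by
  classical
  exact congrArg card (filter_congr fun i _ ↦ (G i).adj_comm x y)

theorem edgeMultiplicity_self (x : V) : edgeMultiplicity G x x = 0 := by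
  simp [edgeMultiplicity]

theorem edgeMultiplicity_le_card (x y : V) : edgeMultiplicity G x y ≤ Fintype.card ι :=
  card_le_univ _

open Classical in
theorem edgeMultiplicity_add_le (w x y z : V) :
    edgeMultiplicity G w x + edgeMultiplicity G y z ≤
      #{i | (G i).Adj w x ∧ (G i).Adj y z} + Fintype.card ι := by
  rw [edgeMultiplicity, edgeMultiplicity, filter_and, ← card_inter_add_card_union]
  gcongr
  exact card_le_univ _

theorem pairWeight_edgeMultiplicity_univ [Fintype V] :
    pairWeight (edgeMultiplicity G) univ = 2 * ∑ i, (G i).edgeSet.ncard := by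
  classical
  have hdeg (i : ι) : ∑ u, #{v | (G i).Adj u v} = 2 * (G i).edgeSet.ncard := by
    simp_rw [← SimpleGraph.neighborFinset_eq_filter, SimpleGraph.card_neighborFinset_eq_degree,
      SimpleGraph.sum_degrees_eq_twice_card_edges, ← SimpleGraph.coe_edgeFinset,
      Set.ncard_coe_finset]
  rw [mul_sum, ← sum_congr rfl fun i _ ↦ hdeg i, sum_comm]
  refine sum_congr rfl fun u _ ↦ ?_
  simp only [edgeMultiplicity, card_filter]
  exact sum_comm

theorem sum_ncard_edgeSet_le [Fintype V] :
    ∑ i, (G i).edgeSet.ncard ≤ Fintype.card ι * (Fintype.card V).choose 2 := by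
  classical
  have hcard (i : ι) : (G i).edgeSet.ncard ≤ (Fintype.card V).choose 2 := by
    rw [← SimpleGraph.coe_edgeFinset, Set.ncard_coe_finset]
    exact (G i).card_edgeFinset_le_card_choose_two
  simpa using sum_le_card_nsmul univ _ _ fun i _ ↦ hcard i

end EdgeMultiplicity

theorem sum_sum_succAbove {M : Type*} [AddCancelCommMonoid M] {p : ℕ} (f : Fin (p + 1) → M) :
    ∑ c : Fin (p + 1), ∑ i, f (c.succAbove i) = p • ∑ i, f i := by
  refine add_left_cancel (a := ∑ c, f c) ?_
  rw [← sum_add_distrib]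
  simp only [← Fin.sum_univ_succAbove, sum_const, card_univ, Fintype.card_fin, succ_nsmul']

section CrossingPairs

variable {V : Type*} {p : ℕ}

theorem HasThreeCrossingPairs.of_comp {q : ℕ} {G : Fin p → SimpleGraph V} {f : Fin q → Fin p}
    (hf : f.Injective) (h : HasThreeCrossingPairs (G ∘ f)) : HasThreeCrossingPairs G := by
  obtain ⟨i, j, k, hij, hik, hjk, h⟩ := h
  exact ⟨f i, f j, f k, hf.ne hij, hf.ne hik, hf.ne hjk, h⟩

theorem sum_edgeMultiplicity_four_le {G : Fin p → SimpleGraph V} (hp : 3 ≤ p)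
    (hG : ¬ HasThreeCrossingPairs G) {w x y z : V} (hwx : w ≠ x) (hwy : w ≠ y) (hwz : w ≠ z)
    (hxy : x ≠ y) (hxz : x ≠ z) (hyz : y ≠ z) :
    (edgeMultiplicity G w x + edgeMultiplicity G y z) +
      (edgeMultiplicity G w y + edgeMultiplicity G x z) +
      (edgeMultiplicity G w z + edgeMultiplicity G x y) ≤ 5 * p := by
  classical
  by_contra! hlt
  let matching : Fin 3 → Finset (Fin p) :=
    ![univ.filter fun i ↦ (G i).Adj w x ∧ (G i).Adj y z,
      univ.filter fun i ↦ (G i).Adj w y ∧ (G i).Adj x z,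
      univ.filter fun i ↦ (G i).Adj w z ∧ (G i).Adj x y]
  have hsum : Fintype.card (Fin 3) * Fintype.card (Fin p) <
      ∑ t, #(matching t) + Fintype.card (Fin p) := by
    have hwxyz := edgeMultiplicity_add_le G w x y z
    have hwyxz := edgeMultiplicity_add_le G w y x z
    have hwzxy := edgeMultiplicity_add_le G w z x y
    simp only [Fintype.card_fin, Fin.sum_univ_three, matching, Matrix.cons_val]
      at hwxyz hwyxz hwzxy ⊢
    omega
  obtain ⟨f, hf, hmem⟩ := exists_injective_mem_of_card_mul_card_lt matching (by simpa) hsum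
  have hmem0 := hmem 0
  have hmem1 := hmem 1
  have hmem2 := hmem 2
  simp only [matching, Matrix.cons_val, mem_filter_univ] at hmem0 hmem1 hmem2
  exact hG ⟨f 0, f 1, f 2, hf.ne (by decide), hf.ne (by decide), hf.ne (by decide),
    w, x, y, z, hwx, hwy, hwz, hxy, hxz, hyz, hmem0.1, hmem0.2, hmem1.1, hmem1.2, hmem2.1, hmem2.2⟩

theorem pairWeight_edgeMultiplicity_le_of_card_eq_four {G : Fin p → SimpleGraph V} (hp : 3 ≤ p)
    (hG : ¬ HasThreeCrossingPairs G) {Q : Finset V} (hQ : #Q = 4) :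
    pairWeight (edgeMultiplicity G) Q ≤ 2 * (5 * p) := by
  classical
  obtain ⟨w, x, y, z, hwx, hwy, hwz, hxy, hxz, hyz, rfl⟩ := card_eq_four.mp hQ
  have hfour := sum_edgeMultiplicity_four_le hp hG hwx hwy hwz hxy hxz hyz
  simp only [pairWeight_insert (edgeMultiplicity_comm G) (edgeMultiplicity_self G),
    pairWeight_singleton, edgeMultiplicity_self, sum_insert, sum_singleton, mem_insert,
    mem_singleton, hwx, hwy, hwz, hxy, hxz, hyz, not_false_eq_true, or_self]
  linarith [edgeMultiplicity_comm G w x, edgeMultiplicity_comm G w y,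
    edgeMultiplicity_comm G w z, edgeMultiplicity_comm G x y, edgeMultiplicity_comm G x z,
    edgeMultiplicity_comm G y z]

variable [Fintype V]

theorem two_mul_sum_ncard_edgeSet_four_le {G : Fin 4 → SimpleGraph V}
    (hG : ¬ HasThreeCrossingPairs G) :
    2 * ∑ i, (G i).edgeSet.ncard + Fintype.card V ≤ 3 * Fintype.card V ^ 2 := by
  rw [← pairWeight_edgeMultiplicity_univ]
  exact pairWeight_add_card_le le_rfl (edgeMultiplicity_comm G) (edgeMultiplicity_self G)
    (edgeMultiplicity_le_card G)
    (fun _ hQ ↦ pairWeight_edgeMultiplicity_le_of_card_eq_four (by decide) hG hQ) univ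

theorem eight_mul_sum_ncard_edgeSet_five_le {G : Fin 5 → SimpleGraph V}
    (hG : ¬ HasThreeCrossingPairs G) :
    8 * ∑ i, (G i).edgeSet.ncard + 5 * Fintype.card V ≤ 15 * Fintype.card V ^ 2 := by
  have hdelete (c : Fin 5) : 2 * ∑ i, (G (c.succAbove i)).edgeSet.ncard + Fintype.card V ≤
      3 * Fintype.card V ^ 2 :=
    two_mul_sum_ncard_edgeSet_four_le fun h ↦ hG (h.of_comp c.succAbove_right_injective)
  have hsum := sum_le_sum fun c (_ : c ∈ univ) ↦ hdelete c
  simp only [sum_add_distrib, ← mul_sum, sum_sum_succAbove fun i ↦ (G i).edgeSet.ncard,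
    sum_const, card_univ, Fintype.card_fin, smul_eq_mul] at hsum
  linarith

end CrossingPairs

theorem add_choose_three (m n : ℕ) :
    (m + n).choose 3 = m.choose 3 + m.choose 2 * n + m * n.choose 2 + n.choose 3 := by
  simp only [Nat.add_choose_eq, Finset.Nat.sum_antidiagonal_eq_sum_range_succ_mk, sum_range_succ,
    sum_range_zero, Nat.reduceSub, Nat.choose_zero_right, Nat.choose_one_right]
  ring

theorem cast_b (n : ℕ) : (b n : ℚ) = (n / 2 : ℕ) * ((n + 1) / 2 : ℕ) * (n - 2) / 2 := by
  have hn : n / 2 + (n + 1) / 2 = n := by omega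
  have hb : b n = (n / 2).choose 2 * ((n + 1) / 2) + n / 2 * ((n + 1) / 2).choose 2 := by
    have := add_choose_three (n / 2) ((n + 1) / 2)
    rw [hn] at this
    rw [b]
    omega
  have hn' : (n : ℚ) = (n / 2 : ℕ) + ((n + 1) / 2 : ℕ) := by exact_mod_cast hn.symm
  rw [hb, hn']
  push_cast [Nat.cast_choose_two]
  ring

theorem eight_mul_b_add_le (m : ℕ) :
    8 * b m + (15 * m ^ 2 + 54 * m + 72) ≤ 8 * b (m + 5) := by
  have hm := cast_b m
  have hm5 := cast_b (m + 5)
  qify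
  rw [hm, hm5]
  obtain ⟨k, rfl | rfl⟩ := m.even_or_odd'
  · rw [show 2 * k / 2 = k by omega, show (2 * k + 1) / 2 = k by omega,
      show (2 * k + 5) / 2 = k + 2 by omega, show (2 * k + 5 + 1) / 2 = k + 3 by omega]
    push_cast
    linarith
  · rw [show (2 * k + 1) / 2 = k by omega, show (2 * k + 1 + 1) / 2 = k + 1 by omega,
      show (2 * k + 1 + 5) / 2 = k + 3 by omega, show (2 * k + 1 + 5 + 1) / 2 = k + 3 by omega]
    push_cast
    linarith

theorem b_f5_inequality_five_general {V : Type*} [Fintype V] [Nonempty V]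
    (G : Fin 5 → SimpleGraph V) (hG : ¬ HasThreeCrossingPairs G) :
    b (Fintype.card V) + (∑ i, (G i).edgeSet.ncard) + 7 * Fintype.card V + 10 <
      b (Fintype.card V + 5) := by
  have hedges := eight_mul_sum_ncard_edgeSet_five_le hG
  have hcomplete := sum_ncard_edgeSet_le G
  have hb := eight_mul_b_add_le (Fintype.card V)
  have hpos : 0 < Fintype.card V := Fintype.card_pos
  generalize Fintype.card V = m at *
  rw [Fintype.card_fin, Nat.choose_two_right] at hcomplete
  obtain hm | hm := lt_or_ge m 3
  · interval_cases m <;> omega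
  · omega

/-- If `n ≥ 9` is odd, then for every `5`-multigraph on `n − 5` vertices without three
crossing pairs with `e` edges in total, `b(n−5) + e + 7(n−5) + 10 < b(n)`. -/
theorem b_f5_inequality_five (n : ℕ) (hn : 9 ≤ n) (hodd : Odd n)
    (G : Fin 5 → SimpleGraph (Fin (n - 5))) (hG : ¬ HasThreeCrossingPairs G) :
    b (n - 5) + (∑ i, (G i).edgeSet.ncard) + 7 * (n - 5) + 10 < b n := by
  have : Nonempty (Fin (n - 5)) := ⟨⟨0, by omega⟩⟩
  simpa [show n - 5 + 5 = n by omega] using b_f5_inequality_five_general G hG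
end

section
/- If n ≥ 9 is odd, then for every 5-multigraph on n−6 vertices without three crossing pairs with total number of edges e, one has (b(n−6) + (n−9)/2) + e + C(n−6,2) + 10(n−6) + 20 < b(n). -/
/-!
Call a vertex set `T` of size `t` sparse if it spans at most `(7t² + 2t - 9) / 4` edges. Two
disjoint sparse sets with at most `7 / 2` edges on average between their points have a sparse
union. Hence in a minimal non-sparse set `S` every sparse `T ⊆ S` admits a vertex of `S \ T`
sending more than `7t / 2` edges to `T`.

Without three crossing pairs, Hall's theorem shows that four vertices span at most 22 edges unless
one of their three perfect matchings has total multiplicity at most 5. Growing `T` vertex by vertex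
inside `S` thus lowers the maximal multiplicity of a triangle from 15 to 12, then that of a pair
to 4, and finally produces four vertices spanning at least 23 edges with no light matching. So
every nonempty set is sparse, and the inequality reduces to comparing polynomials.
-/

open Finset

section Multigraph

variable {p : ℕ} {V : Type*}

open Classical in
/-- The set of indices `i` for which `xy` is an edge of `G i`. -/
noncomputable def edgeColors (G : Fin p → SimpleGraph V) (x y : V) : Finset (Fin p) :=
  {i | (G i).Adj x y}

/-- The multiplicity of the pair `xy` in the multigraph `G`. -/
noncomputable def edgeMult (G : Fin p → SimpleGraph V) (x y : V) : ℕ :=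
  #(edgeColors G x y)

/-- The total multiplicity inside `S`, summed over ordered pairs: this is twice the number of
edges that the multigraph `G` spans on `S`. -/
noncomputable def orderedWeight (G : Fin p → SimpleGraph V) (S : Finset V) : ℕ :=
  ∑ x ∈ S, ∑ y ∈ S, edgeMult G x y

variable (G : Fin p → SimpleGraph V)

lemma mem_edgeColors {x y : V} {i : Fin p} : i ∈ edgeColors G x y ↔ (G i).Adj x y := by
  simp [edgeColors]

lemma edgeMult_comm (x y : V) : edgeMult G x y = edgeMult G y x :=
  congrArg card <| by
    ext i
    rw [mem_edgeColors, mem_edgeColors, SimpleGraph.adj_comm]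

lemma edgeMult_self (x : V) : edgeMult G x x = 0 := by
  simp [edgeMult, edgeColors]

lemma edgeMult_le (x y : V) : edgeMult G x y ≤ p :=
  card_finset_fin_le _

lemma orderedWeight_union [DecidableEq V] {S T : Finset V} (hST : Disjoint S T) :
    orderedWeight G (S ∪ T) =
      orderedWeight G S + orderedWeight G T + 2 * ∑ x ∈ T, ∑ a ∈ S, edgeMult G a x := by
  have hswap : ∑ a ∈ S, ∑ x ∈ T, edgeMult G a x = ∑ x ∈ T, ∑ a ∈ S, edgeMult G a x :=
    sum_comm
  have hsymm : ∑ x ∈ T, ∑ a ∈ S, edgeMult G x a = ∑ x ∈ T, ∑ a ∈ S, edgeMult G a x :=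
    sum_congr rfl fun x _ => sum_congr rfl fun a _ => edgeMult_comm G x a
  simp only [orderedWeight, sum_union hST, sum_add_distrib, hswap, hsymm]
  ring

lemma orderedWeight_le (S : Finset V) : orderedWeight G S ≤ #S * ((#S - 1) * p) := by
  classical
  refine sum_le_card_nsmul S _ _ fun x hx => ?_
  rw [← add_sum_erase S _ hx, edgeMult_self, zero_add, ← card_erase_of_mem hx]
  exact sum_le_card_nsmul _ _ _ fun y _ => edgeMult_le G x y

lemma orderedWeight_univ [Fintype V] :
    orderedWeight G univ = 2 * ∑ i, (G i).edgeSet.ncard := by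
  classical
  have hedges (i : Fin p) : ∑ x, ∑ y, (if (G i).Adj x y then 1 else 0) =
      2 * (G i).edgeSet.ncard := by
    rw [← SimpleGraph.coe_edgeFinset, Set.ncard_coe_finset,
      ← SimpleGraph.sum_degrees_eq_twice_card_edges]
    refine sum_congr rfl fun x _ => ?_
    rw [← SimpleGraph.card_neighborFinset_eq_degree, SimpleGraph.neighborFinset_eq_filter,
      card_filter]
  calc orderedWeight G univ = ∑ x, ∑ y, ∑ i, (if (G i).Adj x y then 1 else 0) := by
        simp only [orderedWeight, edgeMult, edgeColors, card_filter]
    _ = ∑ i, ∑ x, ∑ y, (if (G i).Adj x y then 1 else 0) :=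
        (sum_congr rfl fun _ _ => sum_comm).trans sum_comm
    _ = 2 * ∑ i, (G i).edgeSet.ncard := by
        rw [mul_sum]
        exact sum_congr rfl fun i _ => hedges i

end Multigraph

section CrossingPairs

lemma exists_injective_of_card_add_two_lt {α : Type*} [Fintype α] (hα : 4 ≤ Fintype.card α)
    (A : Fin 3 → Finset α) (hA : ∀ i, (A i).Nonempty)
    (hcard : Fintype.card α + 2 < ∑ i, #(A i)) :
    ∃ f : Fin 3 → α, Function.Injective f ∧ ∀ i, f i ∈ A i := by
  classical
  rw [← all_card_le_biUnion_card_iff_exists_injective]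
  by_contra! hHall
  obtain ⟨s, hs⟩ := hHall
  have hsmall (i) (hi : i ∈ s) : #(A i) ≤ #s - 1 :=
    Nat.le_sub_one_of_lt ((card_le_card (subset_biUnion_of_mem A hi)).trans_lt hs)
  have hsum : ∑ i, #(A i) ≤ #s * (#s - 1) + (3 - #s) * Fintype.card α := by
    rw [← sum_add_sum_compl s]
    refine add_le_add (sum_le_card_nsmul _ _ _ hsmall) ?_
    have hcompl : #sᶜ = 3 - #s := by rw [card_compl, Fintype.card_fin]
    exact hcompl ▸ sum_le_card_nsmul _ _ _ fun i _ => card_le_univ (A i)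
  have hs3 : #s ≤ 3 := card_finset_fin_le s
  have hs1 : #s ≠ 1 := by
    intro h
    obtain ⟨i, hi⟩ := card_pos.mp (h.symm ▸ one_pos)
    have := hsmall i hi
    have := (hA i).card_pos
    omega
  have hs0 : 0 < #s := (Nat.zero_le _).trans_lt hs
  obtain h | h : #s = 2 ∨ #s = 3 := by omega
  all_goals
    rw [h] at hsum
    omega

variable {p : ℕ} {V : Type*} {G : Fin p → SimpleGraph V}

lemma matching_le_or_total_le (hp : 4 ≤ p) (hG : ¬ HasThreeCrossingPairs G) {w x y z : V}
    (hwx : w ≠ x) (hwy : w ≠ y) (hwz : w ≠ z) (hxy : x ≠ y) (hxz : x ≠ z) (hyz : y ≠ z) :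
    edgeMult G w x + edgeMult G y z ≤ p ∨ edgeMult G w y + edgeMult G x z ≤ p ∨
      edgeMult G w z + edgeMult G x y ≤ p ∨
      edgeMult G w x + edgeMult G y z + edgeMult G w y + edgeMult G x z +
        edgeMult G w z + edgeMult G x y ≤ 4 * p + 2 := by
  by_contra! ⟨h₁, h₂, h₃, htotal⟩
  have hcommon (s t u v : V) : edgeMult G s t + edgeMult G u v ≤
      p + #(edgeColors G s t ∩ edgeColors G u v) := by
    rw [edgeMult, edgeMult, ← card_union_add_card_inter]
    exact Nat.add_le_add_right (card_finset_fin_le _) _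
  have hc₁ := hcommon w x y z
  have hc₂ := hcommon w y x z
  have hc₃ := hcommon w z x y
  obtain ⟨f, hf, hmem⟩ := exists_injective_of_card_add_two_lt (by simpa using hp)
    ![edgeColors G w x ∩ edgeColors G y z, edgeColors G w y ∩ edgeColors G x z,
      edgeColors G w z ∩ edgeColors G x y]
    (fun i => card_pos.mp (by fin_cases i <;> dsimp <;> omega))
    (by
      rw [Fintype.card_fin, Fin.sum_univ_three]
      dsimp
      omega)
  have adj_of_mem {i : Fin p} {s t u v : V} (hi : i ∈ edgeColors G s t ∩ edgeColors G u v) :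
      (G i).Adj s t ∧ (G i).Adj u v := by
    simpa only [mem_inter, mem_edgeColors] using hi
  obtain ⟨hadj_wx, hadj_yz⟩ := adj_of_mem (hmem 0)
  obtain ⟨hadj_wy, hadj_xz⟩ := adj_of_mem (hmem 1)
  obtain ⟨hadj_wz, hadj_xy⟩ := adj_of_mem (hmem 2)
  exact hG ⟨f 0, f 1, f 2, hf.ne (by decide), hf.ne (by decide), hf.ne (by decide),
    w, x, y, z, hwx, hwy, hwz, hxy, hxz, hyz, hadj_wx, hadj_yz, hadj_wy, hadj_xz,
    hadj_wz, hadj_xy⟩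

end CrossingPairs

section Sparse

variable {p : ℕ} {V : Type*}

/-- `G` spans at most `(7 t ^ 2 + 2 t - 9) / 4` edges on the `t`-element set `T`.
A single vertex and a triangle whose three pairs all have multiplicity `5` attain this bound. -/
def IsSparseOn (G : Fin p → SimpleGraph V) (T : Finset V) : Prop :=
  2 * orderedWeight G T + 9 ≤ 7 * #T ^ 2 + 2 * #T

/-- `S` is a minimal nonempty set on which `G` is not sparse. -/
def IsMinimalDense (G : Fin p → SimpleGraph V) (S : Finset V) : Prop :=
  Minimal (fun T : Finset V => T.Nonempty ∧ ¬ IsSparseOn G T) S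

/-- Any three distinct vertices of `S` span at most `k` edges of `G`. -/
def TrianglesLE (G : Fin p → SimpleGraph V) (S : Finset V) (k : ℕ) : Prop :=
  ∀ a ∈ S, ∀ b ∈ S, ∀ c ∈ S, a ≠ b → a ≠ c → b ≠ c →
    edgeMult G a b + edgeMult G a c + edgeMult G b c ≤ k

lemma IsSparseOn.union [DecidableEq V] {G : Fin p → SimpleGraph V} {S T : Finset V}
    (hS : IsSparseOn G S) (hT : IsSparseOn G T) (hST : Disjoint S T)
    (hcross : ∀ x ∈ T, 2 * ∑ a ∈ S, edgeMult G a x ≤ 7 * #S) : IsSparseOn G (S ∪ T) := by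
  have hcross' : 2 * ∑ x ∈ T, ∑ a ∈ S, edgeMult G a x ≤ #T * (7 * #S) := by
    rw [mul_sum]
    exact sum_le_card_nsmul T _ _ hcross
  simp only [IsSparseOn, orderedWeight_union G hST, card_union_of_disjoint hST] at hS hT ⊢
  linarith

lemma isSparseOn_of_card_le_three (G : Fin 5 → SimpleGraph V) {T : Finset V} (hT : T.Nonempty)
    (hcard : #T ≤ 3) : IsSparseOn G T := by
  have hweight := orderedWeight_le G T
  have hpos := hT.card_pos
  unfold IsSparseOn
  interval_cases #T <;> omega

end Sparse

section MinimalDense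

variable {p : ℕ} {V : Type*} {S T : Finset V}

lemma IsMinimalDense.exists_heavy {G : Fin p → SimpleGraph V} (hS : IsMinimalDense G S)
    (hTS : T ⊆ S) (hT : T.Nonempty) (hsparse : IsSparseOn G T) :
    ∃ x ∈ S, x ∉ T ∧ 7 * #T < 2 * ∑ a ∈ T, edgeMult G a x := by
  classical
  by_contra! hlight
  have hne : (S \ T).Nonempty := by
    rw [sdiff_nonempty]
    intro hST
    exact hS.prop.2 (hTS.antisymm hST ▸ hsparse)
  have hrest : IsSparseOn G (S \ T) := by
    by_contra h
    exact hS.not_prop_of_lt (sdiff_ssubset hTS hT) ⟨hne, h⟩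
  refine hS.prop.2 (union_sdiff_of_subset hTS ▸ hsparse.union hrest disjoint_sdiff fun x hx => ?_)
  rw [mem_sdiff] at hx
  exact hlight x hx.1 hx.2

variable {G : Fin 5 → SimpleGraph V} {a b c x : V}

lemma IsMinimalDense.exists_heavy_vertex (hS : IsMinimalDense G S) (ha : a ∈ S) :
    ∃ x ∈ S, x ≠ a ∧ 4 ≤ edgeMult G a x := by
  obtain ⟨x, hx, hxT, hheavy⟩ := hS.exists_heavy (singleton_subset_iff.mpr ha)
    (singleton_nonempty a) (isSparseOn_of_card_le_three G (singleton_nonempty a) (by simp))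
  simp only [card_singleton, sum_singleton, mem_singleton] at hheavy hxT
  exact ⟨x, hx, hxT, by omega⟩

lemma IsMinimalDense.exists_heavy_pair (hS : IsMinimalDense G S) (ha : a ∈ S) (hb : b ∈ S)
    (hab : a ≠ b) :
    ∃ x ∈ S, x ≠ a ∧ x ≠ b ∧ 8 ≤ edgeMult G a x + edgeMult G b x := by
  classical
  have hne : ({a, b} : Finset V).Nonempty := insert_nonempty _ _
  obtain ⟨x, hx, hxT, hheavy⟩ := hS.exists_heavy (T := {a, b}) (by grind) hne
    (isSparseOn_of_card_le_three G hne (by grind))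
  rw [card_pair hab, sum_pair hab] at hheavy
  simp only [mem_insert, mem_singleton, not_or] at hxT
  exact ⟨x, hx, hxT.1, hxT.2, by omega⟩

lemma IsMinimalDense.exists_heavy_triple (hS : IsMinimalDense G S) (ha : a ∈ S) (hb : b ∈ S)
    (hc : c ∈ S) (hab : a ≠ b) (hac : a ≠ c) (hbc : b ≠ c) :
    ∃ x ∈ S, x ≠ a ∧ x ≠ b ∧ x ≠ c ∧
      11 ≤ edgeMult G a x + edgeMult G b x + edgeMult G c x := by
  classical
  have hne : ({a, b, c} : Finset V).Nonempty := insert_nonempty _ _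
  have hcard : #{a, b, c} = 3 := card_eq_three.mpr ⟨a, b, c, hab, hac, hbc, rfl⟩
  obtain ⟨x, hx, hxT, hheavy⟩ := hS.exists_heavy (T := {a, b, c}) (by grind) hne
    (isSparseOn_of_card_le_three G hne hcard.le)
  rw [hcard, sum_insert (by grind), sum_pair hbc] at hheavy
  simp only [mem_insert, mem_singleton, not_or] at hxT
  exact ⟨x, hx, hxT.1, hxT.2.1, hxT.2.2, by omega⟩

lemma IsMinimalDense.exists_heavy_quadruple (hS : IsMinimalDense G S) (ha : a ∈ S) (hb : b ∈ S)
    (hc : c ∈ S) (hx : x ∈ S) (hab : a ≠ b) (hac : a ≠ c) (hax : a ≠ x) (hbc : b ≠ c)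
    (hbx : b ≠ x) (hcx : c ≠ x)
    (hweight : edgeMult G a b + edgeMult G a c + edgeMult G a x +
      edgeMult G b c + edgeMult G b x + edgeMult G c x ≤ 27) :
    ∃ y ∈ S, y ≠ a ∧ y ≠ b ∧ y ≠ c ∧ y ≠ x ∧
      15 ≤ edgeMult G a y + edgeMult G b y + edgeMult G c y + edgeMult G x y := by
  classical
  have hcard : #{a, b, c, x} = 4 := by grind
  have hsum (f : V → ℕ) : ∑ v ∈ {a, b, c, x}, f v = f a + f b + f c + f x := by
    rw [sum_insert (by grind), sum_insert (by grind), sum_pair hcx]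
    ring
  have hsparse : IsSparseOn G {a, b, c, x} := by
    simp only [IsSparseOn, orderedWeight, hcard, hsum, edgeMult_self, edgeMult_comm G b a,
      edgeMult_comm G c a, edgeMult_comm G x a, edgeMult_comm G c b,
      edgeMult_comm G x b, edgeMult_comm G x c]
    omega
  obtain ⟨y, hy, hyT, hheavy⟩ :=
    hS.exists_heavy (T := {a, b, c, x}) (by grind) (insert_nonempty _ _) hsparse
  rw [hcard, hsum] at hheavy
  simp only [mem_insert, mem_singleton, not_or] at hyT
  exact ⟨y, hy, hyT.1, hyT.2.1, hyT.2.2.1, hyT.2.2.2, by omega⟩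

lemma IsMinimalDense.triangle_lt_of_opposite_le (hS : IsMinimalDense G S)
    (hG : ¬ HasThreeCrossingPairs G) {k : ℕ} (hk : 13 ≤ k) (hmax : TrianglesLE G S k)
    (ha : a ∈ S) (hb : b ∈ S) (hc : c ∈ S) (hx : x ∈ S) (hab : a ≠ b) (hac : a ≠ c)
    (hax : a ≠ x) (hbc : b ≠ c) (hbx : b ≠ x) (hcx : c ≠ x)
    (hheavy : 11 ≤ edgeMult G a x + edgeMult G b x + edgeMult G c x)
    (hopp : edgeMult G a b + edgeMult G c x ≤ 5) :
    edgeMult G a b + edgeMult G a c + edgeMult G b c < k := by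
  -- The light matching `ab`, `cx` forces nearly full multiplicity from `{a, b}` to `{c, x}`; the
  -- triangle and four-vertex bounds then leave no room for a vertex heavy for `{a, b, c, x}`.
  by_contra! hdense
  have hle := edgeMult_le G
  have habx := hmax a ha b hb x hx hab hax hbx
  have hac5 : edgeMult G a c = 5 := by
    have := hle a c; have := hle b c; omega
  have hbc5 : edgeMult G b c = 5 := by
    have := hle b c; omega
  have := hle a x
  have := hle b x
  obtain ⟨y, hy, hya, hyb, hyc, hyx, hysum⟩ := hS.exists_heavy_quadruple ha hb hc hx hab hac hax
    hbc hbx hcx (by omega)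
  have hfour_c := matching_le_or_total_le (by norm_num) hG hab hac hya.symm hbc hyb.symm hyc.symm
  have hfour_x := matching_le_or_total_le (by norm_num) hG hab hax hya.symm hbx hyb.symm hyx.symm
  have hacy := hmax a ha c hc y hy hac hya.symm hyc.symm
  have hbcy := hmax b hb c hc y hy hbc hyb.symm hyc.symm
  have haxy := hmax a ha x hx y hy hax hya.symm hyx.symm
  have hbxy := hmax b hb x hx y hy hbx hyb.symm hyx.symm
  have := hle a y
  have := hle b y
  have := hle c y
  have := hle x y
  omega

lemma IsMinimalDense.trianglesLE_of_succ (hS : IsMinimalDense G S)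
    (hG : ¬ HasThreeCrossingPairs G) {k : ℕ} (hk : 12 ≤ k) (hmax : TrianglesLE G S (k + 1)) :
    TrianglesLE G S k := by
  intro a ha b hb c hc hab hac hbc
  obtain ⟨x, hx, hxa, hxb, hxc, hheavy⟩ := hS.exists_heavy_triple ha hb hc hab hac hbc
  have hcb := edgeMult_comm G c b
  have hba := edgeMult_comm G b a
  have hca := edgeMult_comm G c a
  obtain h | h | h | h := matching_le_or_total_le (by norm_num) hG hab hac hxa.symm hbc hxb.symm
    hxc.symm
  · have := hS.triangle_lt_of_opposite_le hG (by omega) hmax ha hb hc hx hab hac hxa.symm hbc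
      hxb.symm hxc.symm (by omega) h
    omega
  · have := hS.triangle_lt_of_opposite_le hG (by omega) hmax ha hc hb hx hac hab hxa.symm hbc.symm
      hxc.symm hxb.symm (by omega) h
    omega
  · have := hS.triangle_lt_of_opposite_le hG (by omega) hmax hb hc ha hx hbc hab.symm hxb.symm
      hac.symm hxc.symm hxa.symm (by omega) (by omega)
    omega
  · omega

lemma IsMinimalDense.trianglesLE_twelve (hS : IsMinimalDense G S)
    (hG : ¬ HasThreeCrossingPairs G) : TrianglesLE G S 12 := by
  have h15 : TrianglesLE G S 15 := fun a _ b _ c _ _ _ _ => by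
    have := edgeMult_le G a b
    have := edgeMult_le G a c
    have := edgeMult_le G b c
    omega
  have h14 := hS.trianglesLE_of_succ hG (by norm_num) h15
  have h13 := hS.trianglesLE_of_succ hG (by norm_num) h14
  exact hS.trianglesLE_of_succ hG le_rfl h13

lemma IsMinimalDense.edgeMult_le_four (hS : IsMinimalDense G S)
    (hG : ¬ HasThreeCrossingPairs G) (ha : a ∈ S) (hb : b ∈ S) (hab : a ≠ b) :
    edgeMult G a b ≤ 4 := by
  obtain ⟨x, hx, hxa, hxb, hheavy⟩ := hS.exists_heavy_pair ha hb hab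
  have := hS.trianglesLE_twelve hG a ha b hb x hx hab hxa.symm hxb.symm
  omega

lemma not_isMinimalDense (hG : ¬ HasThreeCrossingPairs G) : ¬ IsMinimalDense G S := by
  intro hS
  obtain ⟨a, ha⟩ := hS.prop.1
  obtain ⟨b, hb, hba, hab4⟩ := hS.exists_heavy_vertex ha
  obtain ⟨c, hc, hca, hcb, hc8⟩ := hS.exists_heavy_pair ha hb hba.symm
  obtain ⟨x, hx, hxa, hxb, hxc, hx11⟩ :=
    hS.exists_heavy_triple ha hb hc hba.symm hca.symm hcb.symm
  have hfour := matching_le_or_total_le (by norm_num) hG hba.symm hca.symm hxa.symm hcb.symm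
    hxb.symm hxc.symm
  have := hS.edgeMult_le_four hG ha hc hca.symm
  have := hS.edgeMult_le_four hG hb hc hcb.symm
  have := hS.edgeMult_le_four hG ha hx hxa.symm
  have := hS.edgeMult_le_four hG hb hx hxb.symm
  have := hS.edgeMult_le_four hG hc hx hxc.symm
  omega

lemma isSparseOn_of_not_hasThreeCrossingPairs (hG : ¬ HasThreeCrossingPairs G)
    (hT : T.Nonempty) : IsSparseOn G T := by
  by_contra hdense
  obtain ⟨S, -, hS⟩ := exists_minimal_le_of_wellFoundedLT
    (fun T : Finset V => T.Nonempty ∧ ¬ IsSparseOn G T) T ⟨hT, hdense⟩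
  exact not_isMinimalDense hG hS

theorem four_mul_sum_ncard_edgeSet_le [Fintype V] [Nonempty V] (hG : ¬ HasThreeCrossingPairs G) :
    4 * ∑ i, (G i).edgeSet.ncard + 9 ≤ 7 * Fintype.card V ^ 2 + 2 * Fintype.card V := by
  have hsparse := isSparseOn_of_not_hasThreeCrossingPairs hG univ_nonempty
  rw [IsSparseOn, orderedWeight_univ, card_univ] at hsparse
  omega

end MinimalDense

section BalancedBipartite

-- Both sides have been increased by `(n + 1) * n` to avoid the factor `n - 1`.
lemma six_mul_choose_three (n : ℕ) : 6 * (n + 1).choose 3 + (n + 1) * n = (n + 1) * n ^ 2 := by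
  cases n with
  | zero => rfl
  | succ n =>
    have h : n * ((n + 1) * (n + 2)) = 6 * (n + 2).choose 3 := by
      simpa [Nat.descFactorial, Nat.factorial] using
        Nat.descFactorial_eq_factorial_mul_choose (n + 2) 3
    linarith

lemma b_two_mul_add_two (k : ℕ) : b (2 * k + 2) = k * (k + 1) ^ 2 := by
  have hall := six_mul_choose_three (2 * k + 1)
  have hhalf := six_mul_choose_three k
  rw [b, show (2 * k + 2) / 2 = k + 1 by omega, show (2 * k + 2 + 1) / 2 = k + 1 by omega]
  ring_nf at hall hhalf ⊢
  omega

lemma two_mul_b_two_mul_add_three (k : ℕ) :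
    2 * b (2 * k + 3) = (k + 1) * (k + 2) * (2 * k + 1) := by
  have hall := six_mul_choose_three (2 * k + 2)
  have hfloor := six_mul_choose_three k
  have hceil := six_mul_choose_three (k + 1)
  rw [b, show (2 * k + 3) / 2 = k + 1 by omega, show (2 * k + 3 + 1) / 2 = k + 2 by omega]
  ring_nf at hall hfloor hceil ⊢
  omega

lemma b_add_six_ge {m : ℕ} (hm : 2 ≤ m) :
    8 * b m + (18 * m ^ 2 + 84 * m + 138) ≤ 8 * b (m + 6) := by
  obtain ⟨k, rfl | rfl⟩ : ∃ k, m = 2 * k + 2 ∨ m = 2 * k + 3 := ⟨(m - 2) / 2, by omega⟩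
  · have h := b_two_mul_add_two k
    have h' := b_two_mul_add_two (k + 3)
    rw [h, show 2 * k + 2 + 6 = 2 * (k + 3) + 2 by ring, h']
    linarith
  · have h := two_mul_b_two_mul_add_three k
    have h' := two_mul_b_two_mul_add_three (k + 3)
    rw [show 2 * k + 3 + 6 = 2 * (k + 3) + 3 by ring]
    linarith

end BalancedBipartite

theorem b_f5_inequality_six_general {V : Type*} [Fintype V] (n : ℕ) (hn : 9 ≤ n)
    (hV : Fintype.card V = n - 6) (G : Fin 5 → SimpleGraph V) (hG : ¬ HasThreeCrossingPairs G) :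
    (b (n - 6) + (n - 9) / 2) + (∑ i, (G i).edgeSet.ncard) + (n - 6).choose 2 +
        10 * (n - 6) + 20 < b n := by
  obtain ⟨m, rfl⟩ : ∃ m, n = m + 6 := ⟨n - 6, by omega⟩
  rw [Nat.add_sub_cancel] at hV ⊢
  have : Nonempty V := Fintype.card_pos_iff.mp (by omega)
  have hedges := four_mul_sum_ncard_edgeSet_le hG
  have hb : 8 * b m + (18 * m ^ 2 + 84 * m + 138) ≤ 8 * b (m + 6) := b_add_six_ge (by omega)
  have hchoose : 2 * m.choose 2 + m = m ^ 2 := by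
    qify
    rw [Nat.cast_choose_two]
    ring
  rw [hV] at hedges
  omega

/-- If `n ≥ 9` is odd, then for every `5`-multigraph on `n − 6` vertices without three
crossing pairs with `e` edges in total,
`(b(n−6) + (n−9)/2) + e + C(n−6,2) + 10(n−6) + 20 < b(n)`. -/
theorem b_f5_inequality_six (n : ℕ) (hn : 9 ≤ n) (hodd : Odd n)
    (G : Fin 5 → SimpleGraph (Fin (n - 6))) (hG : ¬ HasThreeCrossingPairs G) :
    (b (n - 6) + (n - 9) / 2) + (∑ i, (G i).edgeSet.ncard) + (n - 6).choose 2 +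
        10 * (n - 6) + 20 < b n :=
  b_f5_inequality_six_general n hn (Fintype.card_fin _) G hG
end
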